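/- Counterexample decomposition: let M be a Mealy machine (the target) and H a Mealy machine (the hypothesis) over the same alphabets, equipped with an access-sequence map as : S_H → I* such that as(s₀ᴴ) = ε and λ_H(s, i) = P_M(as(s)·i) for every state s ∈ S_H and input symbol i ∈ I. If ĉ ∈ I⁺ is a counterexample in the sense that the last symbol of λ_H(s₀ᴴ, ĉ) differs from P_M(ĉ), then ĉ decomposes as ĉ = u·a·v with u ∈ I*, a ∈ I, v ∈ I⁺ such that P_M(as(δ_H(s₀ᴴ, u))·a·v) ≠ P_M(as(δ_H(s₀ᴴ, u·a))·v); in particular the words as(δ_H(s₀ᴴ, u))·a and as(δ_H(s₀ᴴ, u·a)) are inequivalent under ≡_{P_M}, witnessed by the distinguishing suffix v. -/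

import Mathlib

/-- A (complete, deterministic) Mealy machine with state set `S`, input alphabet `I`,
output alphabet `O`, an initial state, a transition function and an output function. -/
structure Mealy (S I O : Type*) where
  init : S
  trans : S → I → S
  out1 : S → I → O

namespace Mealy

variable {S I O : Type*}

/-- The transition function extended to input words:
`δ(s, ε) = s`, `δ(s, a·w) = δ(δ(s, a), w)`. -/
def transW (M : Mealy S I O) : S → List I → S
  | s, [] => s
  | s, a :: w => M.transW (M.trans s a) w

/-- The output function extended to input words:
`λ(s, ε) = ε`, `λ(s, a·w) = λ(s, a) · λ(δ(s, a), w)`. -/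
def outW (M : Mealy S I O) : S → List I → List O
  | _, [] => []
  | s, a :: w => M.out1 s a :: M.outW (M.trans s a) w

/-- The functional `P_M` of a Mealy machine: the last output symbol emitted when
reading `w` from the initial state (`none` exactly on the empty word, which is
outside the domain `I⁺` of the functional). -/
def func (M : Mealy S I O) (w : List I) : Option O :=
  (M.outW M.init w).getLast?

/-- `u ≡_{P_M} v`: `P_M(u·w) = P_M(v·w)` for every word `w` such that `u·w` is
nonempty. -/
def funcEqv (M : Mealy S I O) (u v : List I) : Prop :=
  ∀ w : List I, u ++ w ≠ [] → M.func (u ++ w) = M.func (v ++ w)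

end Mealy

/-!
For a factorization `c = u ++ v`, let the hypothesis read `u` and the target then read `v` from the
access sequence of the state reached. With `u = []` the final output symbol is the target's answer
on `c`; when `v` is a single letter it is the hypothesis's answer on `c`. These differ for a
counterexample, so the symbol changes at some letter `a` moved from `v` to `u`, and since the last
letter of `c` is never moved, the suffix left after `a` is nonempty.
-/

theorem exists_append_cons_ne_of_ne {α β : Type*} (f : List α → List α → β) {w z : List α}
    (h : f [] (w ++ z) ≠ f w z) :
    ∃ (u : List α) (a : α) (v : List α),
      w = u ++ a :: v ∧ f u (a :: (v ++ z)) ≠ f (u ++ [a]) (v ++ z) := by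
  induction w generalizing f with
  | nil => exact absurd rfl h
  | cons b w ih =>
    by_cases hb : f [] (b :: (w ++ z)) = f [b] (w ++ z)
    · have hrest : f [b] (w ++ z) ≠ f (b :: w) z := hb ▸ h
      obtain ⟨u, a, v, rfl, hne⟩ := ih (fun x y => f (b :: x) y) hrest
      exact ⟨b :: u, a, v, rfl, hne⟩
    · exact ⟨[], b, w, rfl, hb⟩

namespace Mealy

variable {S I O : Type*}

theorem outW_append (M : Mealy S I O) (s : S) (u v : List I) :
    M.outW s (u ++ v) = M.outW s u ++ M.outW (M.transW s u) v := by
  induction u generalizing s with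
  | nil => rfl
  | cons a u ih => exact congrArg (M.out1 s a :: ·) (ih (M.trans s a))

theorem not_funcEqv_of_func_append_ne {M : Mealy S I O} {u u' v : List I} (huv : u ++ v ≠ [])
    (h : M.func (u ++ v) ≠ M.func (u' ++ v)) : ¬ M.funcEqv u u' :=
  fun heqv => h (heqv v huv)

end Mealy

theorem counterexample_decomposition_general {S SH I O : Type*}
    (M : Mealy S I O) (H : Mealy SH I O) (acc : SH → List I)
    (haccout : ∀ (s : SH) (i : I), M.func (acc s ++ [i]) = some (H.out1 s i))
    (s : SH) (c : List I) (hc : c ≠ [])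
    (hce : (H.outW s c).getLast? ≠ M.func (acc s ++ c)) :
    ∃ (u : List I) (a : I) (v : List I),
      c = u ++ a :: v ∧ v ≠ [] ∧
      M.func (acc (H.transW s u) ++ a :: v) ≠ M.func (acc (H.transW s (u ++ [a])) ++ v) ∧
      ¬ M.funcEqv (acc (H.transW s u) ++ [a]) (acc (H.transW s (u ++ [a]))) := by
  obtain ⟨w, i, rfl⟩ := (List.eq_nil_or_concat' c).resolve_left hc
  have hlast : (H.outW s (w ++ [i])).getLast? = M.func (acc (H.transW s w) ++ [i]) := by
    rw [haccout, H.outW_append]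
    exact List.getLast?_concat
  have hends : M.func (acc s ++ (w ++ [i])) ≠ M.func (acc (H.transW s w) ++ [i]) :=
    hlast ▸ hce.symm
  obtain ⟨u, a, v, rfl, hne⟩ :=
    exists_append_cons_ne_of_ne (fun x y => M.func (acc (H.transW s x) ++ y)) hends
  refine ⟨u, a, v ++ [i], List.append_assoc u (a :: v) [i], List.concat_ne_nil i v, hne,
    Mealy.not_funcEqv_of_func_append_ne (v := v ++ [i]) (by simp) ?_⟩
  rwa [List.append_assoc]

/-- Counterexample decomposition (Rivest–Schapire): let `M` be the target and `H` a
hypothesis over the same alphabets with an access-sequence map `acc` such that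
`acc(s₀ᴴ) = ε` and `λ_H(s, i) = P_M(acc(s)·i)`.  If `ĉ` is a counterexample, i.e.
the last symbol of `λ_H(s₀ᴴ, ĉ)` differs from `P_M(ĉ)`, then `ĉ = u·a·v` with `v`
nonempty such that `P_M(acc(δ_H(u))·a·v) ≠ P_M(acc(δ_H(u·a))·v)`; in particular the
words `acc(δ_H(u))·a` and `acc(δ_H(u·a))` are inequivalent under `≡_{P_M}`,
witnessed by the distinguishing suffix `v`. -/
theorem counterexample_decomposition {S SH I O : Type*} [Fintype I] [Fintype O]
    (M : Mealy S I O) (H : Mealy SH I O) (acc : SH → List I)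
    (hacc0 : acc H.init = [])
    (haccout : ∀ (s : SH) (i : I), M.func (acc s ++ [i]) = some (H.out1 s i))
    (c : List I) (hc : c ≠ [])
    (hce : (H.outW H.init c).getLast? ≠ M.func c) :
    ∃ (u : List I) (a : I) (v : List I),
      c = u ++ a :: v ∧ v ≠ [] ∧
      M.func (acc (H.transW H.init u) ++ a :: v) ≠
        M.func (acc (H.transW H.init (u ++ [a])) ++ v) ∧
      ¬ M.funcEqv (acc (H.transW H.init u) ++ [a]) (acc (H.transW H.init (u ++ [a]))) :=
  counterexample_decomposition_general M H acc haccout H.init c hc (by rwa [hacc0])
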